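/- Let q ≥ 2. There exists a polynomial P ∈ R such that det(Ĵ) = Π^{q−1} · P, P is homogeneous of degree q² − q, and P is irreducible in R. (P is the homogeneous defining polynomial of the hypersurface J R_{q−1}, the image of the determinant hypersurface under Hadamard inversion.) -/

import Mathlib

open MvPolynomial

/-- The product `Π = ∏_{(a,b)} X_{a,b}` of all the variables. -/
noncomputable def PiProd (q : ℕ) : MvPolynomial (Fin q × Fin q) ℂ :=
  ∏ p : Fin q × Fin q, X p

/-- The homogeneous representation `Ĵ` of the Hadamard inverse:
`Ĵ_{i,j} = ∏_{(a,b) ≠ (i,j)} X_{a,b}`. -/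
noncomputable def Jhat (q : ℕ) : Matrix (Fin q) (Fin q) (MvPolynomial (Fin q × Fin q) ℂ) :=
  Matrix.of fun i j => ∏ p ∈ Finset.univ.erase (i, j), X p

noncomputable def termP (q : ℕ) (σ : Equiv.Perm (Fin q)) : MvPolynomial (Fin q × Fin q) ℂ :=
  ∏ p ∈ Finset.univ.filter (fun p : Fin q × Fin q => ¬ σ p.2 = p.1), X p

noncomputable def polyP (q : ℕ) : MvPolynomial (Fin q × Fin q) ℂ :=
  ∑ σ : Equiv.Perm (Fin q), C ((Equiv.Perm.sign σ : ℤ) : ℂ) * termP q σ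

lemma prod_graph {q : ℕ} {M : Type*} [CommMonoid M] (σ : Equiv.Perm (Fin q))
    (f : Fin q × Fin q → M) :
    ∏ p ∈ Finset.univ.filter (fun p : Fin q × Fin q => σ p.2 = p.1), f p = ∏ i, f (σ i, i) := by
  symm
  refine Finset.prod_bij' (fun i _ => (σ i, i)) (fun p _ => p.2) ?_ ?_ ?_ ?_ ?_
  · simp
  · simp
  · simp
  · rintro ⟨a, b⟩ h
    simp at h
    simp [h]
  · simp

lemma prod_Jhat {q : ℕ} (hq : 2 ≤ q) (σ : Equiv.Perm (Fin q)) :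
    ∏ i, Jhat q (σ i) i = PiProd q ^ (q - 1) * termP q σ := by
  have hne : (∏ i, (X (σ i, i) : MvPolynomial (Fin q × Fin q) ℂ)) ≠ 0 :=
    Finset.prod_ne_zero_iff.2 fun i _ => X_ne_zero _
  apply mul_left_cancel₀ hne
  have h1 : (∏ i, (X (σ i, i) : MvPolynomial (Fin q × Fin q) ℂ)) * termP q σ = PiProd q := by
    rw [← prod_graph σ (fun p => (X p : MvPolynomial (Fin q × Fin q) ℂ)), termP, PiProd]
    exact Finset.prod_filter_mul_prod_filter_not _ _ _
  have h2 : (∏ i, (X (σ i, i) : MvPolynomial (Fin q × Fin q) ℂ)) * ∏ i, Jhat q (σ i) i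
      = PiProd q ^ q := by
    rw [← Finset.prod_mul_distrib]
    have : ∀ i : Fin q, (X (σ i, i) : MvPolynomial (Fin q × Fin q) ℂ) * Jhat q (σ i) i
        = PiProd q := by
      intro i
      simp only [Jhat, Matrix.of_apply, PiProd]
      exact Finset.mul_prod_erase _ _ (Finset.mem_univ _)
    simp [this]
  rw [h2, mul_left_comm, h1, ← pow_succ]
  congr 1
  omega

lemma det_eq {q : ℕ} (hq : 2 ≤ q) : (Jhat q).det = PiProd q ^ (q - 1) * polyP q := by
  rw [Matrix.det_apply', polyP, Finset.mul_sum]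
  refine Finset.sum_congr rfl fun σ _ => ?_
  rw [prod_Jhat hq, mul_left_comm]
  congr 1

lemma polyP_homog (q : ℕ) : (polyP q).IsHomogeneous (q ^ 2 - q) := by
  refine IsHomogeneous.sum _ _ _ fun σ _ => ?_
  have h : (termP q σ).IsHomogeneous (q ^ 2 - q) := by
    have := IsHomogeneous.prod (Finset.univ.filter (fun p : Fin q × Fin q => ¬ σ p.2 = p.1))
      (fun p => (X p : MvPolynomial (Fin q × Fin q) ℂ)) (fun _ => 1)
      (fun p _ => isHomogeneous_X _ _)
    have hc : ∑ p ∈ Finset.univ.filter (fun p : Fin q × Fin q => ¬ σ p.2 = p.1), 1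
        = q ^ 2 - q := by
      have h1 := Finset.sum_filter_add_sum_filter_not (Finset.univ : Finset (Fin q × Fin q))
        (fun p : Fin q × Fin q => σ p.2 = p.1) (fun _ => 1)
      have h2 : ∑ p ∈ Finset.univ.filter (fun p : Fin q × Fin q => σ p.2 = p.1), 1 = q := by
        simpa using prod_graph σ (fun _ => Multiplicative.ofAdd (1 : ℕ))
      rw [h2] at h1
      simp only [Finset.sum_const, Finset.card_univ, Fintype.card_prod, Fintype.card_fin,
        smul_eq_mul, mul_one] at h1 ⊢
      rw [pow_two]
      omega
    rw [hc] at this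
    exact this
  have h2 := (isHomogeneous_C (Fin q × Fin q) ((Equiv.Perm.sign σ : ℤ) : ℂ)).mul h
  rwa [zero_add] at h2

lemma degreeOf_termP (q : ℕ) (σ : Equiv.Perm (Fin q)) (u) : degreeOf u (termP q σ) ≤ 1 := by
  unfold termP
  refine (degreeOf_prod_le _ _ _).trans ?_
  simp only [degreeOf_X]
  rw [Finset.sum_ite_eq]
  split_ifs <;> simp

lemma degreeOf_polyP (q : ℕ) (u) : degreeOf u (polyP q) ≤ 1 := by
  unfold polyP
  refine (degreeOf_sum_le _ _ _).trans ?_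
  refine Finset.sup_le fun σ _ => ?_
  exact (degreeOf_C_mul_le _ _ _).trans (degreeOf_termP q σ u)

/-- Substitute zero for the variables in `s`. -/
noncomputable def kill {q : ℕ} (s : Finset (Fin q × Fin q)) :
    MvPolynomial (Fin q × Fin q) ℂ →ₐ[ℂ] MvPolynomial (Fin q × Fin q) ℂ :=
  aeval fun w => if w ∈ s then 0 else X w

lemma kill_single_ne {q : ℕ} (u : Fin q × Fin q) : kill {u} (polyP q) ≠ 0 := by
  intro h
  let σ₀ : Equiv.Perm (Fin q) := Equiv.swap u.1 u.2
  let pt : Fin q × Fin q → ℂ := fun p => if σ₀ p.2 = p.1 then 0 else 1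
  have h1 : aeval pt (kill {u} (polyP q)) = aeval pt (polyP q) := by
    rw [kill, ← AlgHom.comp_apply]
    congr 1
    ext w
    by_cases hw : w = u
    · subst hw
      simp [pt, σ₀]
    · simp [hw]
  have h2 : aeval pt (polyP q) = ((Equiv.Perm.sign σ₀ : ℤ) : ℂ) := by
    rw [polyP, map_sum, Finset.sum_eq_single σ₀]
    · rw [map_mul, termP, map_prod, Finset.prod_eq_one]
      · simp
      · intro p hp
        simp only [Finset.mem_filter, Finset.mem_univ, true_and] at hp
        simp [pt, hp]
    · intro σ _ hσ
      obtain ⟨i, hi⟩ : ∃ i, σ i ≠ σ₀ i := by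
        by_contra! hc
        exact hσ (Equiv.ext hc)
      rw [map_mul, termP, map_prod, Finset.prod_eq_zero (i := (σ₀ i, i)), mul_zero]
      · simpa using hi
      · simp [pt]
    · simp
  rw [h, map_zero, h2] at h1
  rcases Int.units_eq_one_or (Equiv.Perm.sign σ₀) with h3 | h3 <;> simp [h3] at h1

lemma kill_pair {q : ℕ} (u v : Fin q × Fin q) (huv : u ≠ v) (hl : u.1 = v.1 ∨ u.2 = v.2) :
    kill {u, v} (polyP q) = 0 := by
  rw [polyP, map_sum]
  refine Finset.sum_eq_zero fun σ _ => ?_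
  rw [map_mul, termP, map_prod]
  have : ∃ w ∈ ({u, v} : Finset (Fin q × Fin q)), ¬ σ w.2 = w.1 := by
    by_contra! hc
    have h1 := hc u (by simp)
    have h2 := hc v (by simp)
    apply huv
    rcases hl with hl | hl
    · exact Prod.ext hl (σ.injective (by rw [h1, h2, hl]))
    · exact Prod.ext (by rw [← h1, ← h2, hl]) hl
  obtain ⟨w, hw, hσ⟩ := this
  rw [Finset.prod_eq_zero (i := w), mul_zero]
  · simpa using hσ
  · simp only [kill, aeval_X, if_pos hw]

lemma kill_congr {q : ℕ} (s t : Finset (Fin q × Fin q)) (A : MvPolynomial (Fin q × Fin q) ℂ)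
    (h : ∀ w ∈ A.vars, (w ∈ s ↔ w ∈ t)) : kill s A = kill t A := by
  unfold kill
  refine eval₂Hom_congr' rfl ?_ rfl
  intro w hw _
  simp only [h w hw]

lemma step {q : ℕ} {A B : MvPolynomial (Fin q × Fin q) ℂ} (h : polyP q = A * B)
    (u v : Fin q × Fin q) (hl : u.1 = v.1 ∨ u.2 = v.2) (hu : u ∈ A.vars) : v ∈ A.vars := by
  by_contra hv
  have huv : u ≠ v := fun e => hv (e ▸ hu)
  have hP : A * B ≠ 0 := by
    rw [← h]; intro h0
    exact kill_single_ne u (by rw [h0, map_zero])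
  have hB : u ∉ B.vars := by
    intro hB
    have hd := degreeOf_polyP q u
    rw [h, degreeOf_mul_eq (left_ne_zero_of_mul hP) (right_ne_zero_of_mul hP)] at hd
    have h1 : degreeOf u A ≠ 0 := mem_vars_iff_degreeOf_ne_zero.1 hu
    have h2 : degreeOf u B ≠ 0 := mem_vars_iff_degreeOf_ne_zero.1 hB
    omega
  have hk := kill_pair u v huv hl
  rw [h, map_mul] at hk
  rcases mul_eq_zero.1 hk with hk | hk
  · apply kill_single_ne u
    rw [h, map_mul, kill_congr {u} {u, v} A, hk, zero_mul]
    intro w hw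
    have : w ≠ v := fun e => hv (e ▸ hw)
    simp [this]
  · apply kill_single_ne v
    rw [h, map_mul, kill_congr {v} {u, v} B, hk, mul_zero]
    intro w hw
    have : w ≠ u := fun e => hB (e ▸ hw)
    simp [this]

lemma isUnit_of_vars {q : ℕ} {A : MvPolynomial (Fin q × Fin q) ℂ} (hA : A ≠ 0)
    (h : A.vars = ∅) : IsUnit A := by
  rw [vars_eq_empty_iff_eq_C] at h
  rw [h] at hA ⊢
  exact (IsUnit.mk0 _ (fun h0 => hA (by rw [h0, C_0]))).map C

lemma polyP_irreducible {q : ℕ} (hq : 2 ≤ q) : Irreducible (polyP q) := by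
  have i0 : Fin q := ⟨0, by omega⟩
  have hP : polyP q ≠ 0 := fun h0 => kill_single_ne (i0, i0) (by rw [h0, map_zero])
  refine ⟨?_, ?_⟩
  · intro hu
    let a : Fin q := ⟨0, by omega⟩
    let b : Fin q := ⟨1, by omega⟩
    have := hu.map (kill {(a, a), (a, b)})
    rw [kill_pair (a, a) (a, b) (by simp [a, b]) (Or.inl rfl)] at this
    exact not_isUnit_zero this
  · intro A B h
    have hAB : A * B ≠ 0 := h ▸ hP
    have hA := left_ne_zero_of_mul hAB
    have hB := right_ne_zero_of_mul hAB
    by_cases hv : A.vars = ∅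
    · exact Or.inl (isUnit_of_vars hA hv)
    · right
      obtain ⟨u, hu⟩ := Finset.nonempty_iff_ne_empty.2 hv
      apply isUnit_of_vars hB
      rw [Finset.eq_empty_iff_forall_notMem]
      intro w hw
      have h1 : w ∈ A.vars :=
        step h (u.1, w.2) w (Or.inr rfl) (step h u (u.1, w.2) (Or.inl rfl) hu)
      have hd := degreeOf_polyP q w
      rw [h, degreeOf_mul_eq hA hB] at hd
      have h1 : degreeOf w A ≠ 0 := mem_vars_iff_degreeOf_ne_zero.1 h1
      have h2 : degreeOf w B ≠ 0 := mem_vars_iff_degreeOf_ne_zero.1 hw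
      omega

/-- For `q ≥ 2` there is a polynomial `P` with `det Ĵ = Π^{q−1} · P`, where `P` is homogeneous
of degree `q² − q` and irreducible.  (`P` is the defining polynomial of `J R_{q−1}`.) -/
theorem det_Jhat_eq_pow_mul_irreducible (q : ℕ) (hq : 2 ≤ q) :
    ∃ P : MvPolynomial (Fin q × Fin q) ℂ,
      (Jhat q).det = PiProd q ^ (q - 1) * P ∧
      P.IsHomogeneous (q ^ 2 - q) ∧
      Irreducible P :=
  ⟨polyP q, det_eq hq, polyP_homog q, polyP_irreducible hq⟩
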